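/- Let E₀, E₃ be C¹ on [0,T], E₁ be C¹ on [0,T]×[−τ,0], and E₂ be C¹ on [0,T]×[−τ,0]² with E₂(t,s,r) = E₂(t,r,s). Suppose that for every t ∈ [0,T], every a ∈ ℝ and every continuous w : [−τ,0] → ℝ the identity E₀'(t)·a² − 2a·∫_{−τ}^0 ∂ₜE₁(t,−τ−s)w(s)ds + ∫_{−τ}^0∫_{−τ}^0 ∂ₜE₂(t,−τ−s,−τ−r)w(s)w(r)ds dr + E₃'(t) + σ²E₀(t) − ∫_{−τ}^0 w(s)·(d/ds)[2aE₁(t,−τ−s) − 2∫_{−τ}^0 E₂(t,−τ−s,−τ−r)w(r)dr] ds − 2[(E₀(t)+E₁(t,0))a − ∫_{−τ}^0 (E₁(t,−τ−s)+E₂(t,−τ−s,0))w(s)ds]² + (ε/2)a² = 0 holds. Then (E₀,E₁,E₂,E₃) satisfies, at every point of its domain, the four equations (i) E₀'(t) − 2(E₀(t)+E₁(t,0))² + ε/2 = 0; (ii) ∂ₜE₁(t,s) − ∂ₛE₁(t,s) − 2(E₀(t)+E₁(t,0))(E₁(t,s)+E₂(t,s,0)) = 0; (iii) ∂ₜE₂(t,s,r)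 − ∂ₛE₂(t,s,r) − ∂ᵣE₂(t,s,r) − 2(E₁(t,s)+E₂(t,s,0))(E₁(t,r)+E₂(t,r,0)) = 0; (iv) E₃'(t) + σ²E₀(t) = 0. (This is the 'collecting terms' step: vanishing of the coefficients of a², a·w, the quadratic form in w, and the constant term forces the Riccati system.) -/

import Mathlib

open Set

/-!
Replacing `(a, w)` by `(0, 0)`, `(1, 0)`, `(0, w)` and `(1, w)` separates the four homogeneous parts
of the identity. The coefficient of `a * w` vanishes by the fundamental lemma of the calculus of
variations on `[-τ, 0]`. The quadratic part determines its kernel only up to symmetrisation: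
polarising it and applying the fundamental lemma once in each variable shows `M s r + M r s = 0`,
which is enough because `E₂` is symmetric. The arguments `-τ - s` only reflect `[-τ, 0]` onto itself
and reverse the sign of the spatial derivatives.
-/

open MeasureTheory Topology

section CompactSet

variable {X : Type*} [TopologicalSpace X] [T2Space X] [MeasurableSpace X] [OpensMeasurableSpace X]
  {K : Set X} {μ : Measure X} [IsFiniteMeasureOnCompacts μ]

theorem eqOn_zero_of_forall_setIntegral_mul_eq_zero [μ.IsOpenPosMeasure] (hK : IsCompact K)
    (hK' : K ⊆ closure (interior K)) {f : X → ℝ} (hf : ContinuousOn f K)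
    (h : ∀ w : X → ℝ, ContinuousOn w K → ∫ s in K, f s * w s ∂μ = 0) : EqOn f 0 K := by
  have hsq : (fun s => f s * f s) =ᵐ[μ.restrict K] 0 :=
    (setIntegral_eq_zero_iff_of_nonneg_ae (ae_of_all _ fun s => mul_self_nonneg (f s))
      ((hf.mul hf).integrableOn_compact hK)).1 (h f hf)
  have hf₀ : f =ᵐ[μ.restrict K] 0 := hsq.mono fun s hs => mul_self_eq_zero.1 hs
  exact Measure.eqOn_of_ae_eq hf₀ hf continuousOn_const hK'

section Parameter

variable {E : Type*} [NormedAddCommGroup E] [NormedSpace ℝ E]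

theorem continuousOn_setIntegral_of_isCompact {Y : Type*} [TopologicalSpace Y]
    [FirstCountableTopology Y] {L : Set Y} (hL : IsCompact L) (hK : IsCompact K) {F : Y → X → E}
    (hF : ContinuousOn (fun p : Y × X => F p.1 p.2) (L ×ˢ K)) :
    ContinuousOn (fun y => ∫ x in K, F y x ∂μ) L := by
  obtain ⟨C, hC⟩ := (hL.prod hK).exists_bound_of_continuousOn hF
  refine continuousOn_of_dominated (bound := fun _ => C) (fun y hy => ?_) (fun y hy => ?_)
    (integrableOn_const hK.measure_ne_top) ?_
  · exact ((hF.uncurry_left y hy).integrableOn_compact hK).aestronglyMeasurable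
  · exact ae_restrict_of_forall_mem hK.measurableSet fun x hx => hC (y, x) ⟨hy, hx⟩
  · exact ae_restrict_of_forall_mem hK.measurableSet fun x hx => hF.uncurry_right x hx

theorem hasDerivAt_setIntegral_of_isCompact (hK : IsCompact K) {F F' : ℝ → X → E} {L : Set ℝ}
    {y : ℝ} (hL : IsCompact L) (hy : L ∈ 𝓝 y) (hF : ∀ v ∈ L, ContinuousOn (F v) K)
    (hF' : ContinuousOn (fun p : ℝ × X => F' p.1 p.2) (L ×ˢ K))
    (hderiv : ∀ x ∈ K, ∀ v ∈ interior L, HasDerivAt (F · x) (F' v x) v) :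
    HasDerivAt (fun v => ∫ x in K, F v x ∂μ) (∫ x in K, F' y x ∂μ) y := by
  obtain ⟨C, hC⟩ := (hL.prod hK).exists_bound_of_continuousOn hF'
  have hyL : y ∈ L := mem_of_mem_nhds hy
  refine (hasDerivAt_integral_of_dominated_loc_of_deriv_le (bound := fun _ => C)
    (interior_mem_nhds.2 hy) ?_ ((hF y hyL).integrableOn_compact hK) ?_ ?_
    (integrableOn_const hK.measure_ne_top) ?_).2
  · filter_upwards [hy] with v hv
    exact ((hF v hv).integrableOn_compact hK).aestronglyMeasurable
  · exact ((hF'.uncurry_left y hyL).integrableOn_compact hK).aestronglyMeasurable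
  · exact ae_restrict_of_forall_mem hK.measurableSet fun x hx v hv =>
      hC (v, x) ⟨interior_subset hv, hx⟩
  · exact ae_restrict_of_forall_mem hK.measurableSet hderiv

end Parameter

end CompactSet

theorem continuousOn_swap_args {X Y : Type*} [TopologicalSpace X] [TopologicalSpace Y] {K : Set X}
    {M : X → X → Y} (hM : ContinuousOn (fun p : X × X => M p.1 p.2) (K ×ˢ K)) :
    ContinuousOn (fun p : X × X => M p.2 p.1) (K ×ˢ K) :=
  hM.comp continuous_swap.continuousOn fun _ hp => hp.symm

theorem continuousOn_mul_args {X : Type*} [TopologicalSpace X] {K : Set X} {u v : X → ℝ}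
    (hu : ContinuousOn u K) (hv : ContinuousOn v K) :
    ContinuousOn (fun p : X × X => u p.1 * v p.2) (K ×ˢ K) :=
  (hu.comp continuousOn_fst mapsTo_fst_prod).mul (hv.comp continuousOn_snd mapsTo_snd_prod)

/-- The bilinear form `(u, v) ↦ ∫∫ M s r * u s * v r` with kernel `M` on functions on `K`. On the
diagonal `u = v = w` it is the part of the ansatz identity quadratic in `w`. -/
noncomputable def kernelForm {X : Type*} [MeasurableSpace X] (μ : Measure X) (K : Set X)
    (M : X → X → ℝ) (u v : X → ℝ) : ℝ :=
  ∫ s in K, ∫ r in K, M s r * u s * v r ∂μ ∂μ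

namespace kernelForm

variable {X : Type*} [MeasurableSpace X] {μ : Measure X} {K : Set X} {M N : X → X → ℝ}
  {u v w : X → ℝ}

theorem eq_setIntegral_mul :
    kernelForm μ K M u v = ∫ s in K, (∫ r in K, M s r * v r ∂μ) * u s ∂μ := by
  simp only [kernelForm, ← integral_mul_const, mul_right_comm]

theorem const_mul_kernel (c : ℝ) :
    kernelForm μ K (fun s r => c * M s r) u v = c * kernelForm μ K M u v := by
  simp only [kernelForm, ← integral_const_mul, mul_assoc]

theorem mul_kernel (f g : X → ℝ) : kernelForm μ K (fun s r => f s * g r) u v =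
    (∫ s in K, f s * u s ∂μ) * ∫ r in K, g r * v r ∂μ := by
  simp only [kernelForm, mul_right_comm (f _) (g _) (u _), mul_assoc (f _ * u _) (g _) (v _),
    integral_const_mul, integral_mul_const]

variable [TopologicalSpace X] [T2Space X] [SecondCountableTopology X] [OpensMeasurableSpace X]
  [IsFiniteMeasureOnCompacts μ]

theorem integrableOn (hK : IsCompact K)
    (hM : ContinuousOn (fun p : X × X => M p.1 p.2) (K ×ˢ K)) (hu : ContinuousOn u K)
    (hv : ContinuousOn v K) :
    IntegrableOn (fun p : X × X => M p.1 p.2 * u p.1 * v p.2) (K ×ˢ K) (μ.prod μ) :=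
  ((hM.mul (hu.comp continuousOn_fst mapsTo_fst_prod)).mul
    (hv.comp continuousOn_snd mapsTo_snd_prod)).integrableOn_compact (hK.prod hK)

variable [SFinite μ]

theorem eq_setIntegral_prod (hK : IsCompact K)
    (hM : ContinuousOn (fun p : X × X => M p.1 p.2) (K ×ˢ K)) (hu : ContinuousOn u K)
    (hv : ContinuousOn v K) :
    kernelForm μ K M u v = ∫ p in K ×ˢ K, M p.1 p.2 * u p.1 * v p.2 ∂μ.prod μ :=
  (setIntegral_prod _ (integrableOn hK hM hu hv)).symm

theorem add_kernel (hK : IsCompact K)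
    (hM : ContinuousOn (fun p : X × X => M p.1 p.2) (K ×ˢ K))
    (hN : ContinuousOn (fun p : X × X => N p.1 p.2) (K ×ˢ K)) (hu : ContinuousOn u K)
    (hv : ContinuousOn v K) :
    kernelForm μ K (fun s r => M s r + N s r) u v =
      kernelForm μ K M u v + kernelForm μ K N u v := by
  rw [eq_setIntegral_prod hK hM hu hv, eq_setIntegral_prod hK hN hu hv,
    eq_setIntegral_prod hK (hM.add hN) hu hv,
    ← integral_add (integrableOn hK hM hu hv) (integrableOn hK hN hu hv)]
  simp only [add_mul]

theorem swap_kernel (hK : IsCompact K) (hM : ContinuousOn (fun p : X × X => M p.1 p.2) (K ×ˢ K))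
    (hu : ContinuousOn u K) (hv : ContinuousOn v K) :
    kernelForm μ K (fun s r => M r s) u v = kernelForm μ K M v u := by
  rw [eq_setIntegral_prod hK hM hv hu, ← setIntegral_prod_swap,
    eq_setIntegral_prod hK (continuousOn_swap_args hM) hu hv]
  simp only [Prod.fst_swap, Prod.snd_swap, mul_right_comm]

theorem add_left (hK : IsCompact K) (hM : ContinuousOn (fun p : X × X => M p.1 p.2) (K ×ˢ K))
    (hu : ContinuousOn u K) (hv : ContinuousOn v K) (hw : ContinuousOn w K) :
    kernelForm μ K M (u + v) w = kernelForm μ K M u w + kernelForm μ K M v w := by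
  rw [eq_setIntegral_prod hK hM hu hw, eq_setIntegral_prod hK hM hv hw,
    eq_setIntegral_prod hK hM (hu.add hv) hw,
    ← integral_add (integrableOn hK hM hu hw) (integrableOn hK hM hv hw)]
  simp only [Pi.add_apply, mul_add, add_mul]

theorem add_right (hK : IsCompact K) (hM : ContinuousOn (fun p : X × X => M p.1 p.2) (K ×ˢ K))
    (hu : ContinuousOn u K) (hv : ContinuousOn v K) (hw : ContinuousOn w K) :
    kernelForm μ K M u (v + w) = kernelForm μ K M u v + kernelForm μ K M u w := by
  rw [eq_setIntegral_prod hK hM hu hv, eq_setIntegral_prod hK hM hu hw,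
    eq_setIntegral_prod hK hM hu (hv.add hw),
    ← integral_add (integrableOn hK hM hu hv) (integrableOn hK hM hu hw)]
  simp only [Pi.add_apply, mul_add]

theorem symmetrization_eq_zero (hK : IsCompact K)
    (hM : ContinuousOn (fun p : X × X => M p.1 p.2) (K ×ˢ K))
    (h : ∀ w, ContinuousOn w K → kernelForm μ K M w w = 0) (hu : ContinuousOn u K)
    (hv : ContinuousOn v K) :
    kernelForm μ K (fun s r => M s r + M r s) u v = 0 := by
  have hMswap : ContinuousOn (fun p : X × X => M p.2 p.1) (K ×ˢ K) :=
    continuousOn_swap_args hM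
  calc kernelForm μ K (fun s r => M s r + M r s) u v
      = kernelForm μ K M u v + kernelForm μ K M v u := by
        rw [add_kernel hK hM hMswap hu hv, swap_kernel hK hM hu hv]
    _ = kernelForm μ K M (u + v) (u + v) - kernelForm μ K M u u - kernelForm μ K M v v := by
        rw [add_left hK hM hu hv (hu.add hv), add_right hK hM hu hu hv, add_right hK hM hv hu hv]
        ring
    _ = 0 := by rw [h _ (hu.add hv), h u hu, h v hv, sub_zero, sub_zero]

theorem kernel_add_swap_eq_zero [μ.IsOpenPosMeasure] (hK : IsCompact K)
    (hK' : K ⊆ closure (interior K)) (hM : ContinuousOn (fun p : X × X => M p.1 p.2) (K ×ˢ K))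
    (h : ∀ w, ContinuousOn w K → kernelForm μ K M w w = 0) {s r : X} (hs : s ∈ K) (hr : r ∈ K) :
    M s r + M r s = 0 := by
  have hN : ContinuousOn (fun p : X × X => M p.1 p.2 + M p.2 p.1) (K ×ˢ K) :=
    hM.add (continuousOn_swap_args hM)
  refine eqOn_zero_of_forall_setIntegral_mul_eq_zero (μ := μ) hK hK'
    (hN.uncurry_left (f := fun s r => M s r + M r s) s hs) (fun v hv => ?_) hr
  refine eqOn_zero_of_forall_setIntegral_mul_eq_zero (μ := μ) hK hK'
    (f := fun s => ∫ r in K, (M s r + M r s) * v r ∂μ)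
    (continuousOn_setIntegral_of_isCompact hK hK
      (hN.mul (hv.comp continuousOn_snd mapsTo_snd_prod))) (fun u hu => ?_) hs
  rw [← eq_setIntegral_mul]
  exact symmetrization_eq_zero hK hM h hu hv

end kernelForm

theorem coefficients_eq_zero_of_forall_eq_zero {X : Type*} [TopologicalSpace X] [T2Space X]
    [SecondCountableTopology X] [MeasurableSpace X] [OpensMeasurableSpace X] {μ : Measure X}
    [IsFiniteMeasureOnCompacts μ] [SFinite μ] [μ.IsOpenPosMeasure] {K : Set X} (hK : IsCompact K)
    (hK' : K ⊆ closure (interior K)) {c₂ c₀ : ℝ} {l : X → ℝ} {M : X → X → ℝ}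
    (hl : ContinuousOn l K) (hM : ContinuousOn (fun p : X × X => M p.1 p.2) (K ×ˢ K))
    (h : ∀ (x : ℝ) (w : X → ℝ), ContinuousOn w K →
      c₂ * x ^ 2 + x * (∫ s in K, l s * w s ∂μ) + kernelForm μ K M w w + c₀ = 0) :
    c₂ = 0 ∧ (∀ s ∈ K, l s = 0) ∧ (∀ s ∈ K, ∀ r ∈ K, M s r + M r s = 0) ∧ c₀ = 0 := by
  have hc₀ : c₀ = 0 := by simpa [kernelForm] using h 0 0 continuousOn_const
  have hc₂ : c₂ = 0 := by simpa [kernelForm, hc₀] using h 1 0 continuousOn_const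
  have hquad : ∀ w, ContinuousOn w K → kernelForm μ K M w w = 0 := fun w hw => by
    simpa [hc₀] using h 0 w hw
  have hlin : ∀ w, ContinuousOn w K → ∫ s in K, l s * w s ∂μ = 0 := fun w hw => by
    simpa [hc₀, hc₂, hquad w hw] using h 1 w hw
  exact ⟨hc₂, eqOn_zero_of_forall_setIntegral_mul_eq_zero hK hK' hl hlin,
    fun s hs r hr => kernelForm.kernel_add_swap_eq_zero hK hK' hM hquad hs hr, hc₀⟩

theorem continuousOn_derivWithin_fst {Y G : Type*} [NormedAddCommGroup Y] [NormedSpace ℝ Y]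
    [NormedAddCommGroup G] [NormedSpace ℝ G] {f : ℝ → Y → G} {S : Set ℝ} {U : Set Y}
    (hS : UniqueDiffOn ℝ S) (hU : UniqueDiffOn ℝ U)
    (hf : ContDiffOn ℝ 1 (fun p : ℝ × Y => f p.1 p.2) (S ×ˢ U)) :
    ContinuousOn (fun p : ℝ × Y => derivWithin (fun u => f u p.2) S p.1) (S ×ˢ U) := by
  have hcont : ContinuousOn (fun p : ℝ × Y =>
      fderivWithin ℝ (fun p : ℝ × Y => f p.1 p.2) (S ×ˢ U) p (1, 0)) (S ×ˢ U) :=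
    (hf.continuousOn_fderivWithin (hS.prod hU) le_rfl).clm_apply continuousOn_const
  refine hcont.congr fun p hp => ?_
  have hslice : HasDerivWithinAt (fun u : ℝ => (u, p.2)) (1, 0) S p.1 :=
    (hasDerivWithinAt_id p.1 S).prodMk (hasDerivWithinAt_const p.1 S p.2)
  have hmaps : MapsTo (fun u => (u, p.2)) S (S ×ˢ U) := fun u hu => ⟨hu, hp.2⟩
  exact ((hf.differentiableOn one_ne_zero p hp).hasFDerivWithinAt.comp_hasDerivWithinAt p.1
    hslice hmaps).derivWithin (hS p.1 hp.1)

section Interval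

variable {a b : ℝ}

theorem intervalIntegral_eq_setIntegral_Icc {E : Type*} [NormedAddCommGroup E] [NormedSpace ℝ E]
    (hab : a ≤ b) (f : ℝ → E) : ∫ x in a..b, f x = ∫ x in Icc a b, f x := by
  rw [intervalIntegral.integral_of_le hab, integral_Icc_eq_integral_Ioc]

theorem hasDerivAt_intervalIntegral_mul {g : ℝ → ℝ → ℝ} {w : ℝ → ℝ} {s : ℝ}
    (hg : ContDiffOn ℝ 1 (fun p : ℝ × ℝ => g p.1 p.2) (Icc a b ×ˢ Icc a b))
    (hw : ContinuousOn w (Icc a b)) (hs : s ∈ Ioo a b) :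
    HasDerivAt (fun s' => ∫ r in a..b, g s' r * w r)
      (∫ r in Icc a b, derivWithin (g · r) (Icc a b) s * w r) s := by
  have hab : a < b := hs.1.trans hs.2
  have hunique : UniqueDiffOn ℝ (Icc a b) := uniqueDiffOn_Icc hab
  simp only [intervalIntegral_eq_setIntegral_Icc hab.le]
  refine hasDerivAt_setIntegral_of_isCompact isCompact_Icc isCompact_Icc
    (Icc_mem_nhds hs.1 hs.2) (F := fun v r => g v r * w r)
    (F' := fun v r => derivWithin (g · r) (Icc a b) v * w r)
    (fun v hv => (hg.continuousOn.uncurry_left (f := g) v hv).mul hw)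
    ((continuousOn_derivWithin_fst hunique hunique hg).mul
      (hw.comp continuousOn_snd mapsTo_snd_prod)) fun r hr v hv => ?_
  rw [interior_Icc] at hv
  have hslice : DifferentiableOn ℝ (g · r) (Icc a b) :=
    (hg.differentiableOn one_ne_zero).comp (differentiableOn_id.prodMk (differentiableOn_const r))
      fun v hv => ⟨hv, hr⟩
  exact ((hslice v (Ioo_subset_Icc_self hv)).hasDerivWithinAt.hasDerivAt
    (Icc_mem_nhds hv.1 hv.2)).mul_const (w r)

theorem derivWithin_const_mul_sub_const_mul_intervalIntegral {f w : ℝ → ℝ} {g : ℝ → ℝ → ℝ} {s : ℝ}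
    (hf : DifferentiableOn ℝ f (Icc a b))
    (hg : ContDiffOn ℝ 1 (fun p : ℝ × ℝ => g p.1 p.2) (Icc a b ×ˢ Icc a b))
    (hw : ContinuousOn w (Icc a b)) (hs : s ∈ Ioo a b) (c d : ℝ) :
    derivWithin (fun s' => c * f s' - d * ∫ r in a..b, g s' r * w r) (Icc a b) s =
      c * derivWithin f (Icc a b) s - d * ∫ r in Icc a b, derivWithin (g · r) (Icc a b) s * w r :=
  (((hf s (Ioo_subset_Icc_self hs)).hasDerivWithinAt.const_mul c).sub
    ((hasDerivAt_intervalIntegral_mul hg hw hs).hasDerivWithinAt.const_mul d)).derivWithin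
      (uniqueDiffOn_Icc (hs.1.trans hs.2) s (Ioo_subset_Icc_self hs))

theorem intervalIntegral_mul_derivWithin_eq_sub_kernelForm (hab : a < b) {f w : ℝ → ℝ}
    {g : ℝ → ℝ → ℝ} (hf : ContDiffOn ℝ 1 f (Icc a b))
    (hg : ContDiffOn ℝ 1 (fun p : ℝ × ℝ => g p.1 p.2) (Icc a b ×ˢ Icc a b))
    (hw : ContinuousOn w (Icc a b)) (c d : ℝ) :
    ∫ s in a..b, w s *
        derivWithin (fun s' => c * f s' - d * ∫ r in a..b, g s' r * w r) (Icc a b) s =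
      c * (∫ s in Icc a b, derivWithin f (Icc a b) s * w s) -
        d * kernelForm volume (Icc a b) (fun s r => derivWithin (g · r) (Icc a b) s) w w := by
  have hunique : UniqueDiffOn ℝ (Icc a b) := uniqueDiffOn_Icc hab
  have hf' : IntegrableOn (fun s => derivWithin f (Icc a b) s * w s) (Icc a b) :=
    ((hf.continuousOn_derivWithin hunique le_rfl).mul hw).integrableOn_compact isCompact_Icc
  have hg' : IntegrableOn
      (fun s => (∫ r in Icc a b, derivWithin (g · r) (Icc a b) s * w r) * w s) (Icc a b) :=
    ((continuousOn_setIntegral_of_isCompact isCompact_Icc isCompact_Icc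
      ((continuousOn_derivWithin_fst hunique hunique hg).mul
        (hw.comp continuousOn_snd mapsTo_snd_prod))).mul hw).integrableOn_compact isCompact_Icc
  -- The endpoints are null, so differentiation under the integral is needed only in the interior.
  calc _ = ∫ s in a..b, (c * (derivWithin f (Icc a b) s * w s) -
        d * ((∫ r in Icc a b, derivWithin (g · r) (Icc a b) s * w r) * w s)) :=
        intervalIntegral.integral_congr_Ioo_of_le hab.le fun s hs => by
          simp only [derivWithin_const_mul_sub_const_mul_intervalIntegral
            (hf.differentiableOn one_ne_zero) hg hw hs]
          ring
    _ = _ := by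
        rw [intervalIntegral_eq_setIntegral_Icc hab.le,
          integral_sub (hf'.const_mul _) (hg'.const_mul _), integral_const_mul,
          integral_const_mul, kernelForm.eq_setIntegral_mul]

/-- The left-hand side of the ansatz identity at the state `(x, w)` with memory interval `[a, b]`,
after collecting the coefficients `c₂` of `x²` and `c₀` of `1`. At a fixed time, `A` and `K` are the
time derivatives of `E₁` and `E₂`, `f` and `g` are `E₁` and `E₂` themselves, and `k * x - ∫ G w` is
the bracket that is squared. -/
noncomputable def ansatzResidual (a b c₂ c₀ k : ℝ) (A f G : ℝ → ℝ) (K g : ℝ → ℝ → ℝ) (x : ℝ)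
    (w : ℝ → ℝ) : ℝ :=
  c₂ * x ^ 2 - 2 * x * (∫ s in a..b, A s * w s)
    + (∫ s in a..b, ∫ r in a..b, K s r * w s * w r) + c₀
    - (∫ s in a..b, w s *
        derivWithin (fun s' => 2 * x * f s' - 2 * ∫ r in a..b, g s' r * w r) (Icc a b) s)
    - 2 * (k * x - ∫ s in a..b, G s * w s) ^ 2

theorem ansatzResidual_eq_quadratic_polynomial (hab : a < b) {c₂ c₀ k : ℝ} {A f G : ℝ → ℝ}
    {K g : ℝ → ℝ → ℝ} (hA : ContinuousOn A (Icc a b)) (hG : ContinuousOn G (Icc a b))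
    (hK : ContinuousOn (fun p : ℝ × ℝ => K p.1 p.2) (Icc a b ×ˢ Icc a b))
    (hf : ContDiffOn ℝ 1 f (Icc a b))
    (hg : ContDiffOn ℝ 1 (fun p : ℝ × ℝ => g p.1 p.2) (Icc a b ×ˢ Icc a b)) (x : ℝ) {w : ℝ → ℝ}
    (hw : ContinuousOn w (Icc a b)) :
    ansatzResidual a b c₂ c₀ k A f G K g x w =
      (c₂ - 2 * k ^ 2) * x ^ 2
        + x * (∫ s in Icc a b, -2 * (A s + derivWithin f (Icc a b) s - 2 * k * G s) * w s)
        + kernelForm volume (Icc a b)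
            (fun s r => K s r + 2 * derivWithin (g · r) (Icc a b) s + -2 * (G s * G r)) w w
        + c₀ := by
  have hunique : UniqueDiffOn ℝ (Icc a b) := uniqueDiffOn_Icc hab
  have hint {φ : ℝ → ℝ} (hφ : ContinuousOn φ (Icc a b)) :
      IntegrableOn (fun s => φ s * w s) (Icc a b) :=
    (hφ.mul hw).integrableOn_compact isCompact_Icc
  have hlinear : ∫ s in Icc a b, -2 * (A s + derivWithin f (Icc a b) s - 2 * k * G s) * w s =
      -2 * ((∫ s in Icc a b, A s * w s) + (∫ s in Icc a b, derivWithin f (Icc a b) s * w s)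
        - 2 * k * ∫ s in Icc a b, G s * w s) := by
    have hf' := hint (hf.continuousOn_derivWithin hunique le_rfl)
    have hAf' : IntegrableOn (fun s => A s * w s + derivWithin f (Icc a b) s * w s) (Icc a b) :=
      (hint hA).add hf'
    simp only [mul_assoc (-2 : ℝ), sub_mul, add_mul, mul_assoc (2 * k), integral_const_mul]
    rw [integral_sub hAf' ((hint hG).const_mul _), integral_add (hint hA) hf', integral_const_mul]
  have hquadratic : kernelForm volume (Icc a b)
      (fun s r => K s r + 2 * derivWithin (g · r) (Icc a b) s + -2 * (G s * G r)) w w =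
      kernelForm volume (Icc a b) K w w
        + 2 * kernelForm volume (Icc a b) (fun s r => derivWithin (g · r) (Icc a b) s) w w
        + -2 * (∫ s in Icc a b, G s * w s) ^ 2 := by
    have hg' := continuousOn_const (c := (2 : ℝ)).mul
      (continuousOn_derivWithin_fst hunique hunique hg)
    rw [kernelForm.add_kernel isCompact_Icc (hK.add hg')
        (continuousOn_const.mul (continuousOn_mul_args hG hG)) hw hw,
      kernelForm.add_kernel isCompact_Icc hK hg' hw hw,
      kernelForm.const_mul_kernel, kernelForm.const_mul_kernel, kernelForm.mul_kernel, sq]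
  rw [ansatzResidual, hlinear, hquadratic,
    intervalIntegral_mul_derivWithin_eq_sub_kernelForm hab hf hg hw]
  simp only [intervalIntegral_eq_setIntegral_Icc hab.le, kernelForm]
  ring

theorem coefficients_eq_zero_of_ansatzResidual_eq_zero (hab : a < b) {c₂ c₀ k : ℝ} {A f G : ℝ → ℝ}
    {K g : ℝ → ℝ → ℝ} (hA : ContinuousOn A (Icc a b)) (hG : ContinuousOn G (Icc a b))
    (hK : ContinuousOn (fun p : ℝ × ℝ => K p.1 p.2) (Icc a b ×ˢ Icc a b))
    (hf : ContDiffOn ℝ 1 f (Icc a b))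
    (hg : ContDiffOn ℝ 1 (fun p : ℝ × ℝ => g p.1 p.2) (Icc a b ×ˢ Icc a b))
    (h : ∀ (x : ℝ) (w : ℝ → ℝ), ContinuousOn w (Icc a b) →
      ansatzResidual a b c₂ c₀ k A f G K g x w = 0) :
    c₂ - 2 * k ^ 2 = 0 ∧
      (∀ s ∈ Icc a b, A s + derivWithin f (Icc a b) s - 2 * k * G s = 0) ∧
      (∀ s ∈ Icc a b, ∀ r ∈ Icc a b,
        K s r + K r s + 2 * (derivWithin (g · r) (Icc a b) s + derivWithin (g · s) (Icc a b) r)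
          - 4 * (G s * G r) = 0) ∧
      c₀ = 0 := by
  have hunique : UniqueDiffOn ℝ (Icc a b) := uniqueDiffOn_Icc hab
  obtain ⟨hc₂, hl, hM, hc₀⟩ := coefficients_eq_zero_of_forall_eq_zero (μ := volume)
    (l := fun s => -2 * (A s + derivWithin f (Icc a b) s - 2 * k * G s))
    isCompact_Icc (closure_interior_Icc hab.ne).superset
    (continuousOn_const.mul ((hA.add (hf.continuousOn_derivWithin hunique le_rfl)).sub
      (continuousOn_const.mul hG)))
    ((hK.add (continuousOn_const.mul (continuousOn_derivWithin_fst hunique hunique hg))).add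
      (continuousOn_const.mul (continuousOn_mul_args hG hG)))
    fun x w hw =>
      (ansatzResidual_eq_quadratic_polynomial hab hA hG hK hf hg x hw).symm.trans (h x w hw)
  exact ⟨hc₂, fun s hs => by linarith [hl s hs], fun s hs r hr => by linarith [hM s hs r hr], hc₀⟩

open scoped Pointwise in
theorem derivWithin_comp_const_sub_Icc {E : Type*} [NormedAddCommGroup E] [NormedSpace ℝ E]
    (f : ℝ → E) (a b x : ℝ) :
    derivWithin (fun y => f (a + b - y)) (Icc a b) x =
      -derivWithin f (Icc a b) (a + b - x) := by
  rw [derivWithin_comp_const_sub, neg_Icc, vadd_Icc]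
  simp only [add_neg_cancel_right, add_neg_cancel_comm]

theorem mapsTo_const_sub_Icc {α : Type*} [AddCommGroup α] [PartialOrder α] [IsOrderedAddMonoid α]
    (a b : α) : MapsTo (fun s => a + b - s) (Icc a b) (Icc a b) := fun s hs =>
  ⟨by simpa using sub_le_sub_left hs.2 (a + b), by simpa using sub_le_sub_left hs.1 (a + b)⟩

theorem coefficients_eq_zero_of_reflected_ansatzResidual_eq_zero (hab : a < b) {c c₂ c₀ k : ℝ}
    (hc : a + b = c) {A f G : ℝ → ℝ} {K g : ℝ → ℝ → ℝ} (hA : ContinuousOn A (Icc a b))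
    (hG : ContinuousOn G (Icc a b))
    (hK : ContinuousOn (fun p : ℝ × ℝ => K p.1 p.2) (Icc a b ×ˢ Icc a b))
    (hf : ContDiffOn ℝ 1 f (Icc a b))
    (hg : ContDiffOn ℝ 1 (fun p : ℝ × ℝ => g p.1 p.2) (Icc a b ×ˢ Icc a b))
    (h : ∀ (x : ℝ) (w : ℝ → ℝ), ContinuousOn w (Icc a b) →
      ansatzResidual a b c₂ c₀ k (fun s => A (c - s)) (fun s => f (c - s)) (fun s => G (c - s))
        (fun s r => K (c - s) (c - r)) (fun s r => g (c - s) (c - r)) x w = 0) :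
    c₂ - 2 * k ^ 2 = 0 ∧
      (∀ s ∈ Icc a b, A s - derivWithin f (Icc a b) s - 2 * k * G s = 0) ∧
      (∀ s ∈ Icc a b, ∀ r ∈ Icc a b,
        K s r + K r s - 2 * (derivWithin (g · r) (Icc a b) s + derivWithin (g · s) (Icc a b) r)
          - 4 * (G s * G r) = 0) ∧
      c₀ = 0 := by
  subst hc
  have hmaps := mapsTo_const_sub_Icc a b
  have hcont : ContinuousOn (fun s => a + b - s) (Icc a b) := by fun_prop
  have hsmooth : ContDiff ℝ 1 fun s : ℝ => a + b - s := by fun_prop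
  have hmaps₂ : MapsTo (Prod.map (a + b - ·) (a + b - ·)) (Icc a b ×ˢ Icc a b)
      (Icc a b ×ˢ Icc a b) := hmaps.prodMap hmaps
  obtain ⟨h₂, hl, hM, h₀⟩ := coefficients_eq_zero_of_ansatzResidual_eq_zero hab
    (A := fun s => A (a + b - s)) (f := fun s => f (a + b - s)) (G := fun s => G (a + b - s))
    (K := fun s r => K (a + b - s) (a + b - r)) (g := fun s r => g (a + b - s) (a + b - r))
    (hA.comp hcont hmaps) (hG.comp hcont hmaps) (hK.comp (hcont.prodMap hcont) hmaps₂)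
    (hf.comp hsmooth.contDiffOn hmaps) (hg.comp (hsmooth.prodMap hsmooth).contDiffOn hmaps₂) h
  refine ⟨h₂, fun s hs => ?_, fun s hs r hr => ?_, h₀⟩
  · have h := hl (a + b - s) (hmaps hs)
    simp only [derivWithin_comp_const_sub_Icc f, sub_sub_cancel] at h
    linarith
  · have h := hM (a + b - s) (hmaps hs) (a + b - r) (hmaps hr)
    simp only [sub_sub_cancel, derivWithin_comp_const_sub_Icc (g · r),
      derivWithin_comp_const_sub_Icc (g · s)] at h
    linarith

end Interval

theorem collecting_terms_general {τ σ ε : ℝ} {I : Set ℝ} (hI : UniqueDiffOn ℝ I) (hτ : 0 < τ)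
    {E₀ : ℝ → ℝ} {E₁ : ℝ → ℝ → ℝ} {E₂ : ℝ → ℝ → ℝ → ℝ} {E₃ : ℝ → ℝ} {t : ℝ} (ht : t ∈ I)
    (_hE₀ : DifferentiableWithinAt ℝ E₀ I t)
    (hE₁ : ContDiffOn ℝ 1 (fun p : ℝ × ℝ => E₁ p.1 p.2) (I ×ˢ Icc (-τ) 0))
    (hE₂ : ContDiffOn ℝ 1 (fun p : ℝ × ℝ × ℝ => E₂ p.1 p.2.1 p.2.2)
      (I ×ˢ Icc (-τ) 0 ×ˢ Icc (-τ) 0))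
    (_hE₃ : DifferentiableWithinAt ℝ E₃ I t)
    (hsym : ∀ u ∈ I, ∀ s ∈ Icc (-τ) 0, ∀ r ∈ Icc (-τ) 0, E₂ u s r = E₂ u r s)
    (hid : ∀ (a : ℝ) (w : ℝ → ℝ), ContinuousOn w (Icc (-τ) 0) →
      derivWithin E₀ I t * a ^ 2
        - 2 * a * (∫ s in (-τ)..0, derivWithin (fun u => E₁ u (-τ - s)) I t * w s)
        + (∫ s in (-τ)..0, ∫ r in (-τ)..0,
            derivWithin (fun u => E₂ u (-τ - s) (-τ - r)) I t * w s * w r)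
        + derivWithin E₃ I t + σ ^ 2 * E₀ t
        - (∫ s in (-τ)..0, w s *
            derivWithin (fun s' => 2 * a * E₁ t (-τ - s')
              - 2 * ∫ r in (-τ)..0, E₂ t (-τ - s') (-τ - r) * w r) (Icc (-τ) 0) s)
        - 2 * ((E₀ t + E₁ t 0) * a
            - ∫ s in (-τ)..0, (E₁ t (-τ - s) + E₂ t (-τ - s) 0) * w s) ^ 2
        + ε / 2 * a ^ 2 = 0) :
    derivWithin E₀ I t - 2 * (E₀ t + E₁ t 0) ^ 2 + ε / 2 = 0 ∧
      (∀ s ∈ Icc (-τ) 0,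
        derivWithin (fun u => E₁ u s) I t - derivWithin (fun v => E₁ t v) (Icc (-τ) 0) s
          - 2 * (E₀ t + E₁ t 0) * (E₁ t s + E₂ t s 0) = 0) ∧
      (∀ s ∈ Icc (-τ) 0, ∀ r ∈ Icc (-τ) 0,
        derivWithin (fun u => E₂ u s r) I t - derivWithin (fun v => E₂ t v r) (Icc (-τ) 0) s
          - derivWithin (fun v => E₂ t s v) (Icc (-τ) 0) r
          - 2 * (E₁ t s + E₂ t s 0) * (E₁ t r + E₂ t r 0) = 0) ∧
      derivWithin E₃ I t + σ ^ 2 * E₀ t = 0 := by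
  have hneg : -τ < 0 := neg_lt_zero.2 hτ
  have hJ : UniqueDiffOn ℝ (Icc (-τ) 0) := uniqueDiffOn_Icc hneg
  have hE₁t : ContDiffOn ℝ 1 (E₁ t) (Icc (-τ) 0) :=
    hE₁.comp (f := fun s => (t, s)) (by fun_prop) fun s hs => ⟨ht, hs⟩
  have hE₂t : ContDiffOn ℝ 1 (fun p : ℝ × ℝ => E₂ t p.1 p.2) (Icc (-τ) 0 ×ˢ Icc (-τ) 0) :=
    hE₂.comp (f := fun p => (t, p)) (by fun_prop) fun p hp => ⟨ht, hp⟩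
  have hdtE₁ : ContinuousOn (fun s => derivWithin (fun u => E₁ u s) I t) (Icc (-τ) 0) :=
    (continuousOn_derivWithin_fst hI hJ hE₁).comp (f := fun s => (t, s)) (by fun_prop)
      fun s hs => ⟨ht, hs⟩
  have hdtE₂ : ContinuousOn (fun p : ℝ × ℝ => derivWithin (fun u => E₂ u p.1 p.2) I t)
      (Icc (-τ) 0 ×ˢ Icc (-τ) 0) :=
    (continuousOn_derivWithin_fst (f := fun u (q : ℝ × ℝ) => E₂ u q.1 q.2) hI (hJ.prod hJ)
      hE₂).comp (f := fun p => (t, p)) (by fun_prop) fun p hp => ⟨ht, hp⟩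
  have hG : ContinuousOn (fun s => E₁ t s + E₂ t s 0) (Icc (-τ) 0) :=
    hE₁t.continuousOn.add <| hE₂t.continuousOn.comp (f := fun s => (s, 0)) (by fun_prop)
      fun s hs => ⟨hs, right_mem_Icc.2 hneg.le⟩
  obtain ⟨h₀, h₁, h₂, h₃⟩ := coefficients_eq_zero_of_reflected_ansatzResidual_eq_zero hneg
    (add_zero (-τ)) (c₂ := derivWithin E₀ I t + ε / 2) (c₀ := derivWithin E₃ I t + σ ^ 2 * E₀ t)
    (k := E₀ t + E₁ t 0) (K := fun s r => derivWithin (fun u => E₂ u s r) I t)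
    hdtE₁ hG hdtE₂ hE₁t hE₂t fun a w hw => by
      rw [ansatzResidual]
      linarith [hid a w hw]
  refine ⟨by linarith, fun s hs => by linarith [h₁ s hs], fun s hs r hr => ?_, h₃⟩
  have hsym_t : derivWithin (fun u => E₂ u r s) I t = derivWithin (fun u => E₂ u s r) I t :=
    derivWithin_congr (fun u hu => hsym u hu r hr s hs) (hsym t ht r hr s hs)
  have hsym_s : derivWithin (fun v => E₂ t v s) (Icc (-τ) 0) r =
      derivWithin (fun v => E₂ t s v) (Icc (-τ) 0) r :=
    derivWithin_congr (fun v hv => hsym t ht v hv s hs) (hsym t ht r hr s hs)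
  linarith [h₂ s hs r hr]

/- STATEMENT 6: the converse 'collecting terms' step. If the quadratic-ansatz identity
holds for all t ∈ [0,T], a ∈ ℝ and continuous w : [−τ,0] → ℝ, then the coefficients
must vanish, i.e. (E₀,E₁,E₂,E₃) satisfies the four equations of the MFG Riccati system
at every point of the domain. -/
theorem collecting_terms (T τ σ ε : ℝ)
    (hT : 0 < T) (hτ : 0 < τ) (hτT : τ ≤ T) (hσ : 0 < σ) (hε : 0 < ε)
    (E₀ : ℝ → ℝ) (E₁ : ℝ → ℝ → ℝ) (E₂ : ℝ → ℝ → ℝ → ℝ) (E₃ : ℝ → ℝ)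
    (hE₀ : ContDiffOn ℝ 1 E₀ (Icc 0 T))
    (hE₁ : ContDiffOn ℝ 1 (fun p : ℝ × ℝ => E₁ p.1 p.2) (Icc 0 T ×ˢ Icc (-τ) 0))
    (hE₂ : ContDiffOn ℝ 1 (fun p : ℝ × ℝ × ℝ => E₂ p.1 p.2.1 p.2.2)
      (Icc 0 T ×ˢ Icc (-τ) 0 ×ˢ Icc (-τ) 0))
    (hE₃ : ContDiffOn ℝ 1 E₃ (Icc 0 T))
    (hsym : ∀ t ∈ Icc (0:ℝ) T, ∀ s ∈ Icc (-τ) (0:ℝ), ∀ r ∈ Icc (-τ) (0:ℝ),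
      E₂ t s r = E₂ t r s)
    (hid : ∀ t ∈ Icc (0:ℝ) T, ∀ a : ℝ, ∀ w : ℝ → ℝ, ContinuousOn w (Icc (-τ) 0) →
      derivWithin E₀ (Icc 0 T) t * a^2
        - 2 * a * (∫ s in (-τ)..(0:ℝ),
            derivWithin (fun u => E₁ u (-τ - s)) (Icc 0 T) t * w s)
        + (∫ s in (-τ)..(0:ℝ), ∫ r in (-τ)..(0:ℝ),
            derivWithin (fun u => E₂ u (-τ - s) (-τ - r)) (Icc 0 T) t * w s * w r)
        + derivWithin E₃ (Icc 0 T) t + σ^2 * E₀ t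
        - (∫ s in (-τ)..(0:ℝ), w s *
            derivWithin (fun s' => 2 * a * E₁ t (-τ - s')
              - 2 * ∫ r in (-τ)..(0:ℝ), E₂ t (-τ - s') (-τ - r) * w r)
              (Icc (-τ) 0) s)
        - 2 * ((E₀ t + E₁ t 0) * a
            - ∫ s in (-τ)..(0:ℝ), (E₁ t (-τ - s) + E₂ t (-τ - s) 0) * w s)^2
        + ε/2 * a^2 = 0) :
    (∀ t ∈ Icc (0:ℝ) T,
      derivWithin E₀ (Icc 0 T) t - 2 * (E₀ t + E₁ t 0)^2 + ε/2 = 0) ∧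
    (∀ t ∈ Icc (0:ℝ) T, ∀ s ∈ Icc (-τ) (0:ℝ),
      derivWithin (fun u => E₁ u s) (Icc 0 T) t
        - derivWithin (fun v => E₁ t v) (Icc (-τ) 0) s
        - 2 * (E₀ t + E₁ t 0) * (E₁ t s + E₂ t s 0) = 0) ∧
    (∀ t ∈ Icc (0:ℝ) T, ∀ s ∈ Icc (-τ) (0:ℝ), ∀ r ∈ Icc (-τ) (0:ℝ),
      derivWithin (fun u => E₂ u s r) (Icc 0 T) t
        - derivWithin (fun v => E₂ t v r) (Icc (-τ) 0) s
        - derivWithin (fun v => E₂ t s v) (Icc (-τ) 0) r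
        - 2 * (E₁ t s + E₂ t s 0) * (E₁ t r + E₂ t r 0) = 0) ∧
    (∀ t ∈ Icc (0:ℝ) T,
      derivWithin E₃ (Icc 0 T) t + σ^2 * E₀ t = 0) := by
  have h := fun t ht => collecting_terms_general (uniqueDiffOn_Icc hT) hτ ht
    (hE₀.differentiableOn one_ne_zero t ht) hE₁ hE₂ (hE₃.differentiableOn one_ne_zero t ht) hsym
    (hid t ht)
  exact ⟨fun t ht => (h t ht).1, fun t ht => (h t ht).2.1, fun t ht => (h t ht).2.2.1,
    fun t ht => (h t ht).2.2.2⟩
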